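/- There exists a universal constant C < ∞ such that the following holds. Let g₂ : ℤ × ℤ₊ → ℝ be finitely supported, define G₂ : ℤ₊⁴ → ℝ by G₂(x₁,x₂,x₃,x₄) = g₂(x₁ − x₂, x₃) if (x₁ = x₄ = 0 or x₂ = x₄ = 0), and G₂ = 0 otherwise, and define g̃₂ : ℤ⁴ → ℝ by g̃₂(x₁,x₂,x₃,x₄) = g₂(x₁, |x₂| − 1_{x₂<0}) if x₃ = x₄ = 0, and g̃₂ = 0 otherwise. Then for every λ > 0: sup over finitely supported q : ℤ₊⁴ → ℝ of [ 2⟨G₂, q⟩ − λ Σ q² − 𝓔₄(q) ] ≤ C · sup over finitely supported q̃ : ℤ⁴ → ℝ of [ 2⟨g̃₂, q̃⟩ − λ Σ q̃² − 𝓓₄(q̃) ]. Equivalently, ⟨G₂, (λ − S₀)⁻¹ G₂⟩ ≤ C ⟨g̃₂, (λ − Δ)⁻¹ g̃₂⟩. -/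

import Mathlib

/-!
The variational formulas reduce the bound to a transport of test functions: it suffices to find a
map `φ : ℤ⁴ → ℤ₊⁴` for which `q̃ = q ∘ φ` pairs with `g̃₂` as `q` does with `G₂`, and has `ℓ²` norm
and Dirichlet form bounded by those of `q`. The map is
`φ(x) = (x₁⁺ + |x₃|', x₁⁻ + |x₃|', |x₂|', |x₄|')`, where `|·|'` is the reflection `foldZ`.

On `x₃ = x₄ = 0` it covers the set `{min(y₁, y₂) = y₄ = 0}` carrying `G₂` exactly twice, so that
`⟨g̃₂, q ∘ φ⟩ = 2⟨G₂, q⟩` (`finsum_fold_pairing`). On all of `ℤ⁴` it is exactly eight-to-one, since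
`(a, b) ↦ (a - b, min(a, b))` identifies `ℤ₊²` with `ℤ × ℤ₊`; this gives the `ℓ²` bound
(`finsum_sq_fold_le`). A unit step of `ℤ⁴` is mapped to an increment `0`, `±eᵢ` or `±(e₁ + e₂)`
(`foldMap_step`), each of which is a composition of at most three allowed exclusion moves
(`localEnergy_le`). With Cauchy-Schwarz along these paths and the bounded multiplicity of `φ`,
`𝓓₄(q ∘ φ) ≤ 5760 𝓔₄(q)` (`latticeDirichlet_fold_le`). Testing the right-hand supremum with the
appropriate multiple of `q ∘ φ` proves the theorem with `C = 1440`.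
-/

/-- The `j`-th move vector of the dimension-reduced exclusion walk on `ℤ₊^m`:
`e₁, e₂-e₁, …, e_m-e_{m-1}, -e_m` (0-indexed); together with their negatives these
form the list `V_m`. -/
def stepVec (m : ℕ) (j : Fin (m + 1)) : Fin m → ℤ :=
  fun i => (if (i : ℕ) = (j : ℕ) then 1 else 0) - (if (i : ℕ) + 1 = (j : ℕ) then 1 else 0)

/-- The move `v` is allowed at `y ∈ ℤ₊^m` iff `y + v` stays in `ℤ₊^m`. -/
def okMove {m : ℕ} (v : Fin m → ℤ) (y : Fin m → ℕ) : Prop :=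
  ∀ i, 0 ≤ (y i : ℤ) + v i

instance {m : ℕ} (v : Fin m → ℤ) (y : Fin m → ℕ) : Decidable (okMove v y) := by
  unfold okMove; infer_instance

/-- The result `y + v` of an allowed move. -/
def moveTo {m : ℕ} (v : Fin m → ℤ) (y : Fin m → ℕ) : Fin m → ℕ :=
  fun i => ((y i : ℤ) + v i).toNat

/-- The exclusion Dirichlet form
`𝓔_m(f) = (1/2) Σ_{y ∈ ℤ₊^m} Σ_{v ∈ V_m} [y+v ∈ ℤ₊^m] (f(y+v) - f(y))²`. -/
noncomputable def exclDirichlet (m : ℕ) (f : (Fin m → ℕ) → ℝ) : ℝ :=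
  (1 / 2) * ∑ᶠ y : Fin m → ℕ, ∑ j : Fin (m + 1), ∑ ε ∈ ({1, -1} : Finset ℤ),
    (if okMove (ε • stepVec m j) y then (f (moveTo (ε • stepVec m j) y) - f y) ^ 2 else 0)

/-- The lattice Dirichlet form `𝓓_k(f) = Σ_{x ∈ ℤ^k} Σ_{i=1}^k (f(x+e_i) - f(x))²`. -/
noncomputable def latticeDirichlet (k : ℕ) (f : (Fin k → ℤ) → ℝ) : ℝ :=
  ∑ᶠ x : Fin k → ℤ, ∑ i : Fin k, (f (x + Pi.single i 1) - f x) ^ 2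

/-- The reflection `x ↦ |x| - 1_{x<0}` of `ℤ` onto `ℤ₊`. -/
def foldZ (x : ℤ) : ℕ := (if 0 ≤ x then x else -x - 1).toNat

/-- The boundary function
`G₂(x₁,x₂,x₃,x₄) = g₂(x₁-x₂, x₃) 1_{x₁=x₄=0 ∨ x₂=x₄=0}` on `ℤ₊⁴`. -/
noncomputable def foldSrc₂ (g₂ : ℤ → ℕ → ℝ) (y : Fin 4 → ℕ) : ℝ :=
  if (y 0 = 0 ∧ y 3 = 0) ∨ (y 1 = 0 ∧ y 3 = 0) then
    g₂ ((y 0 : ℤ) - (y 1 : ℤ)) (y 2)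
  else 0

/-- The folded-out function
`g̃₂(x₁,x₂,x₃,x₄) = g₂(x₁, |x₂| - 1_{x₂<0}) 1_{x₃ = x₄ = 0}` on `ℤ⁴`. -/
noncomputable def foldTgt₂ (g₂ : ℤ → ℕ → ℝ) (x : Fin 4 → ℤ) : ℝ :=
  if x 2 = 0 ∧ x 3 = 0 then g₂ (x 0) (foldZ (x 1)) else 0

/-! ### Sums of finitely supported functions -/

lemma finite_support_of_le {α : Type*} {f g : α → ℝ} (h0 : ∀ a, 0 ≤ f a)
    (hfg : ∀ a, f a ≤ g a) (hg : g.support.Finite) : f.support.Finite := by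
  refine hg.subset fun a ha h => ha ?_
  have := hfg a
  rw [h] at this
  exact le_antisymm this (h0 a)

lemma finsum_le_of_le {α : Type*} {f g : α → ℝ} (hf : f.support.Finite)
    (hfg : ∀ a, f a ≤ g a) (hg : g.support.Finite) : ∑ᶠ a, f a ≤ ∑ᶠ a, g a := by
  classical
  rw [finsum_eq_sum_of_support_subset (s := hf.toFinset ∪ hg.toFinset) f (by simp),
    finsum_eq_sum_of_support_subset (s := hf.toFinset ∪ hg.toFinset) g (by simp)]
  exact Finset.sum_le_sum fun a _ => hfg a

lemma finite_support_comp {α β κ : Type*} [Finite κ] {f : α → ℝ} (hf : f.support.Finite)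
    (φ : β → α) (τ : β → κ) (hinj : Function.Injective fun b => (φ b, τ b)) :
    (fun b => f (φ b)).support.Finite := by
  have := (hf.prod (Set.finite_univ (α := κ))).preimage (hinj.injOn)
  exact this.subset fun b hb => ⟨hb, trivial⟩

/-- Change of variables along a map `φ` with fibres of size at most `|κ|`, the bound on the fibres
being witnessed by a label `τ` that separates the points of each fibre. -/
lemma finsum_comp_le {α β κ : Type*} [Fintype κ] {f : α → ℝ} (hf : f.support.Finite)
    (h0 : ∀ a, 0 ≤ f a) (φ : β → α) (τ : β → κ)
    (hinj : Function.Injective fun b => (φ b, τ b)) :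
    ∑ᶠ b, f (φ b) ≤ Fintype.card κ * ∑ᶠ a, f a := by
  classical
  have hs := finite_support_comp hf φ τ hinj
  rw [finsum_eq_sum_of_support_subset (s := hs.toFinset) _ (by simp),
    finsum_eq_sum_of_support_subset (s := hf.toFinset) f (by simp)]
  calc ∑ b ∈ hs.toFinset, f (φ b)
      = ∑ p ∈ hs.toFinset.image (fun b => (φ b, τ b)), f p.1 := by
        rw [Finset.sum_image fun a _ b _ h => hinj h]
    _ ≤ ∑ p ∈ hf.toFinset ×ˢ (Finset.univ : Finset κ), f p.1 := by
        refine Finset.sum_le_sum_of_subset_of_nonneg ?_ fun p _ _ => h0 _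
        intro p hp
        simp only [Finset.mem_image, Set.Finite.mem_toFinset, Function.mem_support] at hp
        obtain ⟨b, hb, rfl⟩ := hp
        simpa using hb
    _ = Fintype.card κ * ∑ a ∈ hf.toFinset, f a := by
        rw [Finset.sum_product, Finset.mul_sum]
        simp

lemma finsum_comp_le_of_injective {α β : Type*} {f : α → ℝ} (hf : f.support.Finite)
    (h0 : ∀ a, 0 ≤ f a) (φ : β → α) (hinj : Function.Injective φ) :
    ∑ᶠ b, f (φ b) ≤ ∑ᶠ a, f a := by
  simpa using finsum_comp_le hf h0 φ (fun _ => ()) (fun a b h => hinj (Prod.ext_iff.1 h).1)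

lemma finsum_comp_eq {α β : Type*} {f : α → ℝ} (hf : f.support.Finite)
    {φ : β → α} (hinj : Function.Injective φ) (hr : f.support ⊆ Set.range φ) :
    ∑ᶠ b, f (φ b) = ∑ᶠ a, f a := by
  have h2 : (fun b => f (φ b)).support.Finite := hf.preimage hinj.injOn
  rw [← tsum_eq_finsum (L := .unconditional _) hf, ← tsum_eq_finsum (L := .unconditional _) h2,
    hinj.tsum_eq hr]

/-! ### Comparison of the exclusion form with nearest-neighbour differences -/

/-- The energy density of the exclusion Dirichlet form at `y`: the summand whose sum over `y` is
twice `exclDirichlet`. -/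
noncomputable def exclDensity (q : (Fin 4 → ℕ) → ℝ) (y : Fin 4 → ℕ) : ℝ :=
  ∑ j : Fin (4 + 1), ∑ ε ∈ ({1, -1} : Finset ℤ),
    (if okMove (ε • stepVec 4 j) y then (q (moveTo (ε • stepVec 4 j) y) - q y) ^ 2 else 0)

lemma exclDensity_nonneg (q : (Fin 4 → ℕ) → ℝ) (y : Fin 4 → ℕ) : 0 ≤ exclDensity q y :=
  Finset.sum_nonneg fun _ _ => Finset.sum_nonneg fun _ _ => by positivity

lemma exclDensity_finite {q : (Fin 4 → ℕ) → ℝ} (hq : q.support.Finite) :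
    (exclDensity q).support.Finite := by
  have hfin : ∀ v : Fin 4 → ℤ, {y | okMove v y ∧ moveTo v y ∈ q.support}.Finite := by
    intro v
    refine Set.Finite.of_finite_image (hq.subset (s := q.support)
      (t := moveTo v '' {y | okMove v y ∧ moveTo v y ∈ q.support}) ?_) ?_
    · rintro _ ⟨y, hy, rfl⟩
      exact hy.2
    · intro y hy z hz h
      funext i
      have h1 := congrFun h i
      have h2 := hy.1 i
      have h3 := hz.1 i
      simp only [moveTo] at h1
      omega
  have hU : (q.support ∪ ⋃ j : Fin (4 + 1), ⋃ ε ∈ ({1, -1} : Finset ℤ),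
      {y | okMove (ε • stepVec 4 j) y ∧ moveTo (ε • stepVec 4 j) y ∈ q.support}).Finite :=
    hq.union (Set.finite_iUnion fun j => Set.Finite.biUnion (Finset.finite_toSet _)
      fun ε _ => hfin _)
  refine hU.subset fun y hy => ?_
  by_contra hcon
  simp only [Set.mem_union, Set.mem_iUnion, Set.mem_ofPred_eq, not_or, not_exists] at hcon
  refine hy (Finset.sum_eq_zero fun j _ => Finset.sum_eq_zero fun ε hε => ?_)
  split_ifs with hok
  · have h1 : q y = 0 := by simpa using hcon.1
    have h2 : q (moveTo (ε • stepVec 4 j) y) = 0 := by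
      by_contra h
      exact hcon.2 j ε hε ⟨hok, h⟩
    rw [h1, h2]; norm_num
  · rfl

lemma exclDirichlet_eq (q : (Fin 4 → ℕ) → ℝ) :
    exclDirichlet 4 q = (1 / 2) * ∑ᶠ y, exclDensity q y := rfl

lemma sq_le_exclDensity (q : (Fin 4 → ℕ) → ℝ) (j : Fin (4 + 1)) {y z : Fin 4 → ℕ}
    (h : ∀ i, (z i : ℤ) = y i + stepVec 4 j i) : (q z - q y) ^ 2 ≤ exclDensity q y := by
  have hok : okMove ((1 : ℤ) • stepVec 4 j) y := fun i => by
    rw [one_smul, ← h i]; positivity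
  have hmv : moveTo ((1 : ℤ) • stepVec 4 j) y = z := by
    funext i
    simp only [moveTo, one_smul]
    rw [← h i]; simp
  calc (q z - q y) ^ 2 = (if okMove ((1 : ℤ) • stepVec 4 j) y then
        (q (moveTo ((1 : ℤ) • stepVec 4 j) y) - q y) ^ 2 else 0) := by rw [if_pos hok, hmv]
    _ ≤ ∑ ε ∈ ({1, -1} : Finset ℤ), (if okMove (ε • stepVec 4 j) y then
        (q (moveTo (ε • stepVec 4 j) y) - q y) ^ 2 else 0) :=
      Finset.single_le_sum (f := fun ε : ℤ => if okMove (ε • stepVec 4 j) y then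
        (q (moveTo (ε • stepVec 4 j) y) - q y) ^ 2 else 0)
        (fun _ _ => by positivity) (by simp)
    _ ≤ exclDensity q y :=
      Finset.single_le_sum (f := fun j : Fin (4 + 1) => ∑ ε ∈ ({1, -1} : Finset ℤ),
        (if okMove (ε • stepVec 4 j) y then
        (q (moveTo (ε • stepVec 4 j) y) - q y) ^ 2 else 0))
        (fun _ _ => Finset.sum_nonneg fun _ _ => by positivity) (Finset.mem_univ j)

/-- The squared increments of `q` from `y` in the directions in which the folding map moves:
`e₁, e₂, e₃, e₄` and `e₁ + e₂`. -/
noncomputable def localEnergy (q : (Fin 4 → ℕ) → ℝ) (y : Fin 4 → ℕ) : ℝ :=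
  (q (y + ![1, 0, 0, 0]) - q y) ^ 2 + (q (y + ![0, 1, 0, 0]) - q y) ^ 2
    + (q (y + ![0, 0, 1, 0]) - q y) ^ 2 + (q (y + ![0, 0, 0, 1]) - q y) ^ 2
    + (q (y + ![1, 1, 0, 0]) - q y) ^ 2

lemma localEnergy_nonneg (q : (Fin 4 → ℕ) → ℝ) (y : Fin 4 → ℕ) : 0 ≤ localEnergy q y := by
  unfold localEnergy; positivity

/-- Each increment is telescoped along a path of at most three allowed exclusion moves:
`0 → e₁ → e₂ → e₃`, `e₄ → 0` and `0 → e₁ → 2e₁ → e₁ + e₂`. -/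
lemma localEnergy_le (q : (Fin 4 → ℕ) → ℝ) (y : Fin 4 → ℕ) :
    localEnergy q y ≤ 9 * (exclDensity q y + exclDensity q (y + ![1, 0, 0, 0])
      + exclDensity q (y + ![0, 1, 0, 0]) + exclDensity q (y + ![0, 0, 0, 1])
      + exclDensity q (y + ![2, 0, 0, 0])) := by
  have a1 : (q (y + ![1, 0, 0, 0]) - q y) ^ 2 ≤ exclDensity q y :=
    sq_le_exclDensity q 0 fun i => by fin_cases i <;> simp [stepVec]
  have a2 : (q (y + ![0, 1, 0, 0]) - q (y + ![1, 0, 0, 0])) ^ 2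
      ≤ exclDensity q (y + ![1, 0, 0, 0]) :=
    sq_le_exclDensity q 1 fun i => by fin_cases i <;> simp [stepVec]
  have a3 : (q (y + ![0, 0, 1, 0]) - q (y + ![0, 1, 0, 0])) ^ 2
      ≤ exclDensity q (y + ![0, 1, 0, 0]) :=
    sq_le_exclDensity q 2 fun i => by fin_cases i <;> simp [stepVec]
  have a4 : (q y - q (y + ![0, 0, 0, 1])) ^ 2 ≤ exclDensity q (y + ![0, 0, 0, 1]) :=
    sq_le_exclDensity q 4 fun i => by fin_cases i <;> simp [stepVec]
  have a5 : (q (y + ![2, 0, 0, 0]) - q (y + ![1, 0, 0, 0])) ^ 2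
      ≤ exclDensity q (y + ![1, 0, 0, 0]) :=
    sq_le_exclDensity q 0 fun i => by fin_cases i <;> simp [stepVec] <;> ring
  have a6 : (q (y + ![1, 1, 0, 0]) - q (y + ![2, 0, 0, 0])) ^ 2
      ≤ exclDensity q (y + ![2, 0, 0, 0]) :=
    sq_le_exclDensity q 1 fun i => by fin_cases i <;> simp [stepVec] <;> ring
  have n0 := exclDensity_nonneg q y
  have n1 := exclDensity_nonneg q (y + ![1, 0, 0, 0])
  have n2 := exclDensity_nonneg q (y + ![0, 1, 0, 0])
  have n3 := exclDensity_nonneg q (y + ![0, 0, 0, 1])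
  have n4 := exclDensity_nonneg q (y + ![2, 0, 0, 0])
  have two : ∀ a b c : ℝ, (c - a) ^ 2 ≤ 2 * ((b - a) ^ 2 + (c - b) ^ 2) := fun a b c => by
    nlinarith [sq_nonneg ((b - a) - (c - b))]
  have three : ∀ a b c d : ℝ, (d - a) ^ 2 ≤ 3 * ((b - a) ^ 2 + (c - b) ^ 2 + (d - c) ^ 2) :=
    fun a b c d => by
      nlinarith [sq_nonneg ((b - a) - (c - b)), sq_nonneg ((b - a) - (d - c)),
        sq_nonneg ((c - b) - (d - c))]
  have b2 := two (q y) (q (y + ![1, 0, 0, 0])) (q (y + ![0, 1, 0, 0]))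
  have b3 := three (q y) (q (y + ![1, 0, 0, 0])) (q (y + ![0, 1, 0, 0])) (q (y + ![0, 0, 1, 0]))
  have b4 : (q (y + ![0, 0, 0, 1]) - q y) ^ 2 = (q y - q (y + ![0, 0, 0, 1])) ^ 2 := by ring
  have b5 := three (q y) (q (y + ![1, 0, 0, 0])) (q (y + ![2, 0, 0, 0])) (q (y + ![1, 1, 0, 0]))
  unfold localEnergy
  linarith

lemma localEnergy_sum {q : (Fin 4 → ℕ) → ℝ} (hq : q.support.Finite) :
    (localEnergy q).support.Finite ∧ ∑ᶠ y, localEnergy q y ≤ 90 * exclDirichlet 4 q := by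
  have hF := exclDensity_finite hq
  have hsf : ∀ v : Fin 4 → ℕ, (fun y => exclDensity q (y + v)).support.Finite := fun v =>
    hF.preimage (f := (· + v)) (add_left_injective v).injOn
  have hsum : ∀ v : Fin 4 → ℕ, ∑ᶠ y, exclDensity q (y + v) ≤ ∑ᶠ y, exclDensity q y := fun v =>
    finsum_comp_le_of_injective hF (exclDensity_nonneg q) (· + v) (add_left_injective v)
  have s1 := (hF.union (hsf ![1, 0, 0, 0])).subset (Function.support_add _ _)
  have s2 := (s1.union (hsf ![0, 1, 0, 0])).subset (Function.support_add _ _)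
  have s3 := (s2.union (hsf ![0, 0, 0, 1])).subset (Function.support_add _ _)
  have s4 := (s3.union (hsf ![2, 0, 0, 0])).subset (Function.support_add _ _)
  have s5 : (fun y => 9 * (exclDensity q y + exclDensity q (y + ![1, 0, 0, 0])
      + exclDensity q (y + ![0, 1, 0, 0]) + exclDensity q (y + ![0, 0, 0, 1])
      + exclDensity q (y + ![2, 0, 0, 0]))).support.Finite :=
    s4.subset fun y hy h => hy (by
      have h' : exclDensity q y + exclDensity q (y + ![1, 0, 0, 0])
        + exclDensity q (y + ![0, 1, 0, 0]) + exclDensity q (y + ![0, 0, 0, 1])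
        + exclDensity q (y + ![2, 0, 0, 0]) = 0 := h
      simp only [h', mul_zero])
  have hfin := finite_support_of_le (localEnergy_nonneg q) (localEnergy_le q) s5
  refine ⟨hfin, ?_⟩
  have key := finsum_le_of_le hfin (localEnergy_le q) s5
  rw [← mul_finsum, finsum_add_distrib s3 (hsf _), finsum_add_distrib s2 (hsf _),
    finsum_add_distrib s1 (hsf _), finsum_add_distrib hF (hsf _)] at key
  rw [exclDirichlet_eq]
  linarith [hsum ![1, 0, 0, 0], hsum ![0, 1, 0, 0], hsum ![0, 0, 0, 1], hsum ![2, 0, 0, 0]]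

/-! ### The folding map -/

/-- The folding map `ℤ⁴ → ℤ₊⁴`. The first and third coordinates are sent to
`(x₁⁺, x₁⁻) + foldZ x₃ • (1, 1)`, so that `x₁` is the difference of the first two coordinates of
the image and `foldZ x₃` their minimum. -/
def foldMap (x : Fin 4 → ℤ) : Fin 4 → ℕ :=
  ![(x 0).toNat + foldZ (x 2), (-x 0).toNat + foldZ (x 2), foldZ (x 1), foldZ (x 3)]

/-- The signs of the last three coordinates, which separate the eight points of each fibre of
`foldMap`. -/
def foldSign (x : Fin 4 → ℤ) : Bool × Bool × Bool :=
  (decide (x 1 < 0), decide (x 2 < 0), decide (x 3 < 0))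

lemma foldZ_inj {a b : ℤ} (h : foldZ a = foldZ b) (hs : a < 0 ↔ b < 0) : a = b := by
  unfold foldZ at h
  split_ifs at h <;> omega

lemma foldMap_injective : Function.Injective fun x => (foldMap x, foldSign x) := by
  intro x y h
  simp only [foldMap, foldSign, Prod.mk.injEq, decide_eq_decide] at h
  obtain ⟨h, s1, s2, s3⟩ := h
  have h0 := congrFun h 0
  have h1 := congrFun h 1
  have h2 := congrFun h 2
  have h3 := congrFun h 3
  simp at h0 h1 h2 h3
  have e0 : x 0 = y 0 := by omega
  have e2 : foldZ (x 2) = foldZ (y 2) := by rw [e0] at h0; omega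
  funext i
  fin_cases i
  · exact e0
  · exact foldZ_inj h2 s1
  · exact foldZ_inj e2 s2
  · exact foldZ_inj h3 s3

lemma foldZ_succ (a : ℤ) :
    foldZ (a + 1) = foldZ a + 1 ∨ foldZ a = foldZ (a + 1) + 1 ∨ foldZ (a + 1) = foldZ a := by
  unfold foldZ
  split_ifs <;> omega

/-- A lattice step is folded to one of the increments recorded by `localEnergy`, in one of the two
directions, or to no move at all. -/
lemma foldMap_step (x : Fin 4 → ℤ) (i : Fin 4) :
    ∃ v ∈ ({0, ![1, 0, 0, 0], ![0, 1, 0, 0], ![0, 0, 1, 0], ![0, 0, 0, 1], ![1, 1, 0, 0]} :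
      Set (Fin 4 → ℕ)), foldMap (x + Pi.single i 1) = foldMap x + v ∨
        foldMap x = foldMap (x + Pi.single i 1) + v := by
  fin_cases i
  · rcases lt_or_ge (x 0) 0 with h | h
    · refine ⟨![0, 1, 0, 0], by simp, Or.inr ?_⟩
      funext k; fin_cases k <;> simp [foldMap] <;> omega
    · refine ⟨![1, 0, 0, 0], by simp, Or.inl ?_⟩
      funext k; fin_cases k <;> simp [foldMap] <;> omega
  · rcases foldZ_succ (x 1) with h | h | h
    · refine ⟨![0, 0, 1, 0], by simp, Or.inl ?_⟩
      funext k; fin_cases k <;> simp [foldMap, h]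
    · refine ⟨![0, 0, 1, 0], by simp, Or.inr ?_⟩
      funext k; fin_cases k <;> simp [foldMap, h]
    · refine ⟨0, by simp, Or.inl ?_⟩
      funext k; fin_cases k <;> simp [foldMap, h]
  · rcases foldZ_succ (x 2) with h | h | h
    · refine ⟨![1, 1, 0, 0], by simp, Or.inl ?_⟩
      funext k; fin_cases k <;> simp [foldMap, h, add_assoc]
    · refine ⟨![1, 1, 0, 0], by simp, Or.inr ?_⟩
      funext k; fin_cases k <;> simp [foldMap, h, add_assoc]
    · refine ⟨0, by simp, Or.inl ?_⟩
      funext k; fin_cases k <;> simp [foldMap, h]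
  · rcases foldZ_succ (x 3) with h | h | h
    · refine ⟨![0, 0, 0, 1], by simp, Or.inl ?_⟩
      funext k; fin_cases k <;> simp [foldMap, h]
    · refine ⟨![0, 0, 0, 1], by simp, Or.inr ?_⟩
      funext k; fin_cases k <;> simp [foldMap, h]
    · refine ⟨0, by simp, Or.inl ?_⟩
      funext k; fin_cases k <;> simp [foldMap, h]

lemma sq_le_localEnergy (q : (Fin 4 → ℕ) → ℝ) (y v : Fin 4 → ℕ)
    (hv : v ∈ ({0, ![1, 0, 0, 0], ![0, 1, 0, 0], ![0, 0, 1, 0], ![0, 0, 0, 1], ![1, 1, 0, 0]} :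
      Set (Fin 4 → ℕ))) : (q (y + v) - q y) ^ 2 ≤ localEnergy q y := by
  have p1 := sq_nonneg (q (y + ![1, 0, 0, 0]) - q y)
  have p2 := sq_nonneg (q (y + ![0, 1, 0, 0]) - q y)
  have p3 := sq_nonneg (q (y + ![0, 0, 1, 0]) - q y)
  have p4 := sq_nonneg (q (y + ![0, 0, 0, 1]) - q y)
  have p5 := sq_nonneg (q (y + ![1, 1, 0, 0]) - q y)
  simp only [Set.mem_insert_iff, Set.mem_singleton_iff] at hv
  unfold localEnergy
  rcases hv with rfl | rfl | rfl | rfl | rfl | rfl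
  · simp only [add_zero, sub_self]
    linarith
  all_goals linarith

lemma fold_step_sq_le (q : (Fin 4 → ℕ) → ℝ) (x : Fin 4 → ℤ) (i : Fin 4) :
    (q (foldMap (x + Pi.single i 1)) - q (foldMap x)) ^ 2
      ≤ localEnergy q (foldMap x) + localEnergy q (foldMap (x + Pi.single i 1)) := by
  obtain ⟨v, hv, h | h⟩ := foldMap_step x i
  · have := sq_le_localEnergy q (foldMap x) v hv
    rw [← h] at this
    linarith [localEnergy_nonneg q (foldMap (x + Pi.single i 1))]
  · have := sq_le_localEnergy q (foldMap (x + Pi.single i 1)) v hv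
    rw [← h] at this
    nlinarith [localEnergy_nonneg q (foldMap x)]

lemma latticeDirichlet_fold_le {q : (Fin 4 → ℕ) → ℝ} (hq : q.support.Finite) :
    latticeDirichlet 4 (fun x => q (foldMap x)) ≤ 5760 * exclDirichlet 4 q := by
  obtain ⟨hK, hKs⟩ := localEnergy_sum hq
  have f1 := finite_support_comp hK foldMap foldSign foldMap_injective
  have hinj : ∀ i : Fin 4, Function.Injective fun x : Fin 4 → ℤ =>
      (foldMap (x + Pi.single i 1), foldSign (x + Pi.single i 1)) := fun i =>
    foldMap_injective.comp (add_left_injective _)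
  have f2 := fun i => finite_support_comp hK _ _ (hinj i)
  have c1 := finsum_comp_le hK (localEnergy_nonneg q) foldMap foldSign foldMap_injective
  have c2 := fun i => finsum_comp_le hK (localEnergy_nonneg q) _ _ (hinj i)
  have f3 : ∀ i : Fin 4, (fun x => localEnergy q (foldMap x)
      + localEnergy q (foldMap (x + Pi.single i 1))).support.Finite := fun i =>
    (f1.union (f2 i)).subset (Function.support_add _ _)
  have f4 : ∀ i : Fin 4, (fun x => (q (foldMap (x + Pi.single i 1))
      - q (foldMap x)) ^ 2).support.Finite := fun i =>
    finite_support_of_le (fun _ => sq_nonneg _) (fun x => fold_step_sq_le q x i) (f3 i)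
  have hcard : (Fintype.card (Bool × Bool × Bool) : ℝ) = 8 := by norm_num
  rw [hcard] at c1
  unfold latticeDirichlet
  rw [finsum_sum_comm _ _ fun i _ => f4 i]
  have hi : ∀ i : Fin 4, ∑ᶠ x, (q (foldMap (x + Pi.single i 1)) - q (foldMap x)) ^ 2
      ≤ 1440 * exclDirichlet 4 q := fun i => by
    have h := finsum_le_of_le (f4 i) (fun x => fold_step_sq_le q x i) (f3 i)
    rw [finsum_add_distrib f1 (f2 i)] at h
    have := c2 i
    rw [hcard] at this
    linarith
  calc _ ≤ ∑ _i : Fin 4, 1440 * exclDirichlet 4 q := Finset.sum_le_sum fun i _ => hi i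
    _ = _ := by simp; ring

lemma finsum_sq_fold_le {q : (Fin 4 → ℕ) → ℝ} (hq : q.support.Finite) :
    ∑ᶠ x, q (foldMap x) ^ 2 ≤ 8 * ∑ᶠ y, q y ^ 2 := by
  have h := finsum_comp_le (f := fun y => q y ^ 2) (hq.subset fun y hy h => hy (by simp [h]))
    (fun _ => sq_nonneg _) foldMap foldSign foldMap_injective
  have hcard : (Fintype.card (Bool × Bool × Bool) : ℝ) = 8 := by norm_num
  rwa [hcard] at h

/-! ### The linear functional under folding -/

lemma foldTgt₂_finite {g₂ : ℤ → ℕ → ℝ} (hg : (Function.support (Function.uncurry g₂)).Finite) :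
    (foldTgt₂ g₂).support.Finite := by
  have h2 : ((fun p : (ℤ × ℕ) × Bool => (![p.1.1, if p.2 then -(p.1.2 : ℤ) - 1 else p.1.2, 0, 0] :
      Fin 4 → ℤ)) '' (Function.support (Function.uncurry g₂) ×ˢ Set.univ)).Finite :=
    (hg.prod Set.finite_univ).image _
  refine h2.subset fun x hx => ?_
  simp only [Function.mem_support, foldTgt₂, ne_eq, ite_eq_right_iff, not_forall] at hx
  obtain ⟨⟨h2, h3⟩, hx⟩ := hx
  refine ⟨((x 0, foldZ (x 1)), decide (x 1 < 0)), ⟨hx, trivial⟩, ?_⟩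
  funext i
  fin_cases i
  · simp
  · simp [foldZ]; split_ifs <;> omega
  · simp [h2]
  · simp [h3]

/-- Both pairings reduce to sums over the sets `x₃ = x₄ = 0` and `min (y₁, y₂) = y₄ = 0`; the
folding map sends the first onto the second, two to one. -/
lemma finsum_fold_pairing {g₂ : ℤ → ℕ → ℝ}
    (hg : (Function.support (Function.uncurry g₂)).Finite) {q : (Fin 4 → ℕ) → ℝ}
    (hq : q.support.Finite) :
    ∑ᶠ x, foldTgt₂ g₂ x * q (foldMap x) = 2 * ∑ᶠ y, foldSrc₂ g₂ y * q y := by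
  -- the summand `G₂ q` in the coordinates `(z, k)` of the set carrying `G₂`
  let w : ℤ × ℕ → ℝ := fun p => g₂ p.1 p.2 * q ![p.1.toNat, (-p.1).toNat, p.2, 0]
  have hw : w.support.Finite := hg.subset fun p hp h => hp (by
    have : g₂ p.1 p.2 = 0 := h
    simp [w, this])
  have hsrc : ∑ᶠ y, foldSrc₂ g₂ y * q y = ∑ᶠ p, w p := by
    have hinj : Function.Injective fun p : ℤ × ℕ =>
        (![p.1.toNat, (-p.1).toNat, p.2, 0] : Fin 4 → ℕ) := by
      intro p p' h
      have h0 := congrFun h 0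
      have h1 := congrFun h 1
      have h2 := congrFun h 2
      simp at h0 h1 h2
      exact Prod.ext (by omega) h2
    rw [← finsum_comp_eq (hq.subset (Function.support_mul_subset_right _ _)) hinj]
    · refine finsum_congr fun p => ?_
      have hc : (p.1.toNat = 0 ∨ (-p.1).toNat = 0) := by omega
      simp only [foldSrc₂, w]
      rw [if_pos (by simpa using hc)]
      simp
    · intro y hy
      have hy' : foldSrc₂ g₂ y ≠ 0 := fun h => hy (by simp [h])
      simp only [foldSrc₂, ne_eq, ite_eq_right_iff, not_forall] at hy'
      obtain ⟨hy', -⟩ := hy'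
      refine ⟨((y 0 : ℤ) - y 1, y 2), ?_⟩
      funext i
      fin_cases i <;> simp <;> omega
  have htgt : ∑ᶠ x, foldTgt₂ g₂ x * q (foldMap x) = ∑ᶠ p : ℤ × ℤ, w (p.1, foldZ p.2) := by
    have hinj : Function.Injective fun p : ℤ × ℤ => (![p.1, p.2, 0, 0] : Fin 4 → ℤ) := by
      intro p p' h
      exact Prod.ext (by simpa using congrFun h 0) (by simpa using congrFun h 1)
    rw [← finsum_comp_eq ((foldTgt₂_finite hg).subset (Function.support_mul_subset_left _ _)) hinj]
    · refine finsum_congr fun p => ?_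
      have h0 : foldZ 0 = 0 := rfl
      simp [foldTgt₂, foldMap, w, h0]
    · intro x hx
      have hx' : foldTgt₂ g₂ x ≠ 0 := fun h => hx (by simp [h])
      simp only [foldTgt₂, ne_eq, ite_eq_right_iff, not_forall] at hx'
      obtain ⟨hx', -⟩ := hx'
      refine ⟨(x 0, x 1), ?_⟩
      funext i
      fin_cases i <;> simp [hx']
  have hw2 : (fun p : ℤ × ℤ => w (p.1, foldZ p.2)).support.Finite := by
    refine finite_support_comp hw (fun p : ℤ × ℤ => (p.1, foldZ p.2))
      (fun p => decide (p.2 < 0)) fun p p' h => ?_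
    simp only [Prod.mk.injEq, decide_eq_decide] at h
    exact Prod.ext h.1.1 (foldZ_inj h.1.2 h.2)
  have hz : ∀ z : ℤ, ∑' n : ℤ, w (z, foldZ n) = 2 * ∑' k : ℕ, w (z, k) := fun z => by
    have hs : Summable fun k : ℕ => w (z, k) := summable_of_hasFiniteSupport
      (hw.preimage (f := fun k : ℕ => (z, k)) (Prod.mk_right_injective z).injOn)
    have e1 : ∀ k : ℕ, foldZ (k : ℤ) = k := fun k => by simp [foldZ]
    have e2 : ∀ k : ℕ, foldZ (-((k : ℤ) + 1)) = k := fun k => by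
      unfold foldZ; split_ifs <;> omega
    rw [tsum_of_nat_of_neg_add_one (by simpa only [e1] using hs) (by simpa only [e2] using hs)]
    simp only [e1, e2]
    ring
  rw [hsrc, htgt, ← tsum_eq_finsum (L := .unconditional _) hw,
    ← tsum_eq_finsum (L := .unconditional _) hw2,
    (summable_of_hasFiniteSupport hw2).tsum_prod, (summable_of_hasFiniteSupport hw).tsum_prod,
    ← tsum_mul_left]
  exact tsum_congr hz

/-! ### The variational formula on the lattice -/

lemma latticeDirichlet_nonneg (k : ℕ) (f : (Fin k → ℤ) → ℝ) : 0 ≤ latticeDirichlet k f :=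
  finsum_nonneg fun _ => Finset.sum_nonneg fun _ _ => sq_nonneg _

lemma latticeDirichlet_smul (k : ℕ) (f : (Fin k → ℤ) → ℝ) (s : ℝ) :
    latticeDirichlet k (fun x => s * f x) = s ^ 2 * latticeDirichlet k f := by
  unfold latticeDirichlet
  rw [mul_finsum]
  refine finsum_congr fun x => ?_
  rw [Finset.mul_sum]
  exact Finset.sum_congr rfl fun i _ => by ring

/-- The supremum is a genuine one: by Young's inequality it is at most `λ⁻¹ ∑ g̃₂²`. -/
lemma bddAbove_variational {G : (Fin 4 → ℤ) → ℝ} (hG : G.support.Finite) {lam : ℝ}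
    (hlam : 0 < lam) :
    BddAbove {r : ℝ | ∃ qt : (Fin 4 → ℤ) → ℝ, (Function.support qt).Finite ∧
      r = 2 * (∑ᶠ x, G x * qt x) - lam * ∑ᶠ x, (qt x) ^ 2 - latticeDirichlet 4 qt} := by
  refine ⟨∑ᶠ x, lam⁻¹ * G x ^ 2, ?_⟩
  rintro r ⟨qt, hqt, rfl⟩
  have h1 : (fun x => 2 * (G x * qt x)).support.Finite :=
    hqt.subset fun x hx h => hx (by simp [h])
  have h2 : (fun x => lam * qt x ^ 2).support.Finite :=
    hqt.subset fun x hx h => hx (by simp [h])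
  have h3 : (fun x => lam⁻¹ * G x ^ 2).support.Finite :=
    hG.subset fun x hx h => hx (by simp [h])
  have h4 : ∑ᶠ x, (2 * (G x * qt x) - lam * qt x ^ 2) ≤ ∑ᶠ x, lam⁻¹ * G x ^ 2 := by
    refine finsum_le_of_le ((h1.union h2).subset (Function.support_sub _ _)) (fun x => ?_) h3
    have : lam⁻¹ * G x ^ 2 - (2 * (G x * qt x) - lam * qt x ^ 2)
        = lam⁻¹ * (G x - lam * qt x) ^ 2 := by field_simp; ring
    have h5 : 0 ≤ lam⁻¹ * (G x - lam * qt x) ^ 2 := by positivity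
    linarith
  rw [finsum_sub_distrib h1 h2, ← mul_finsum, ← mul_finsum] at h4
  linarith [latticeDirichlet_nonneg 4 qt]

/-- **Foldout lemma, part 2:** the `H₋₁(λ)` norm of `G₂` for the hard-core exclusion
dynamics on `ℤ₊⁴` is bounded by `C` times the `H₋₁(λ)` norm of `g̃₂` for the free
lattice Laplacian on `ℤ⁴`, uniformly in `λ > 0`; both norms are expressed through
their variational formulas. -/
theorem foldout_lemma_part_two :
    ∃ C : ℝ, 0 < C ∧
      ∀ g₂ : ℤ → ℕ → ℝ, (Function.support (Function.uncurry g₂)).Finite →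
        ∀ lam : ℝ, 0 < lam →
          ∀ q : (Fin 4 → ℕ) → ℝ, (Function.support q).Finite →
            2 * (∑ᶠ y : Fin 4 → ℕ, foldSrc₂ g₂ y * q y)
                - lam * ∑ᶠ y : Fin 4 → ℕ, (q y) ^ 2 - exclDirichlet 4 q
              ≤ C * sSup {r : ℝ | ∃ qt : (Fin 4 → ℤ) → ℝ, (Function.support qt).Finite ∧
                  r = 2 * (∑ᶠ x : Fin 4 → ℤ, foldTgt₂ g₂ x * qt x)
                        - lam * ∑ᶠ x : Fin 4 → ℤ, (qt x) ^ 2 - latticeDirichlet 4 qt} := by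
  -- With `A = 5760` the bound of both quadratic terms and `c = 2` the factor in the pairing, the
  -- multiple `c / A` of `q ∘ foldMap` is the test function and `C = A / c²`.
  refine ⟨1440, by norm_num, fun g₂ hg lam hlam q hq => ?_⟩
  have hmem := le_csSup (bddAbove_variational (foldTgt₂_finite hg) hlam)
    ⟨fun x => (1 / 2880) * q (foldMap x),
      (finite_support_comp hq foldMap foldSign foldMap_injective).subset
        fun x hx h => hx (by
          have h' : q (foldMap x) = 0 := h
          simp [h']), rfl⟩
  have e1 : ∑ᶠ x, foldTgt₂ g₂ x * ((1 / 2880) * q (foldMap x))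
      = (1 / 2880) * (2 * ∑ᶠ y, foldSrc₂ g₂ y * q y) := by
    rw [← finsum_fold_pairing hg hq, mul_finsum]
    exact finsum_congr fun x => by ring
  have e2 : ∑ᶠ x, ((1 / 2880) * q (foldMap x)) ^ 2 = (1 / 2880) ^ 2 * ∑ᶠ x, q (foldMap x) ^ 2 := by
    rw [mul_finsum]
    exact finsum_congr fun x => by ring
  rw [e1, e2, latticeDirichlet_smul] at hmem
  have hD := latticeDirichlet_fold_le hq
  have hN := mul_le_mul_of_nonneg_left (finsum_sq_fold_le hq) hlam.le
  have hN0 : 0 ≤ lam * ∑ᶠ y, q y ^ 2 :=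
    mul_nonneg hlam.le (finsum_nonneg fun _ => sq_nonneg _)
  linarith
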